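/- Let f be a non-nilpotent linear operator on a nonzero finite-dimensional complex vector space V, let ρ(f) be its spectral radius, and let ‖·‖ be a norm on End(V). Then the polynomial growth rate s(f) = lim_{n→∞} (log‖f^n‖ − n·log ρ(f))/log n equals k − 1, where k is the maximum, over all eigenvalues λ of f with |λ| = ρ(f), of the least positive integer j such that ker((f − λ·id_V)^j) = ker((f − λ·id_V)^{j+1}); equivalently, k is the maximal size of a Jordan block of f whose eigenvalue has absolute value ρ(f). -/

import Mathlib

/-- The spectral radius of an endomorphism of a finite-dimensional complex vector
space: the maximal absolute value of the roots in `ℂ` of its characteristic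
polynomial. -/
noncomputable def specRadEnd {V : Type*} [AddCommGroup V] [Module ℂ V]
    [FiniteDimensional ℂ V] (f : Module.End ℂ V) : ℝ :=
  ((((LinearMap.charpoly f).roots.map fun z => ‖z‖₊).sup : NNReal) : ℝ)

open Filter Topology Asymptotics in
theorem Module.End.pow_apply_eq_sum_of_genEigenvector {E : Type*} [AddCommGroup E] [Module ℂ E]
    {L : Module.End ℂ E} {μ : ℂ} {k : ℕ} {x : E} (hx : ((L - μ • 1) ^ k) x = 0) (n : ℕ) :
    (L ^ n) x = ∑ i ∈ Finset.range k,
      ((n.choose i : ℂ) * μ ^ (n - i)) • ((L - μ • 1) ^ i) x := by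
  have hbinom : (L ^ n) x = ∑ i ∈ Finset.range (n + 1),
      ((n.choose i : ℂ) * μ ^ (n - i)) • ((L - μ • 1) ^ i) x := by
    have hc : Commute (L - μ • 1) (μ • (1 : Module.End ℂ E)) :=
      (Commute.one_right _).smul_right μ
    have h := hc.add_pow n
    rw [sub_add_cancel] at h
    rw [h, LinearMap.sum_apply]
    refine Finset.sum_congr rfl fun i _ => ?_
    rw [smul_pow, one_pow, mul_smul_comm, mul_one, ← nsmul_eq_mul', ← Nat.cast_smul_eq_nsmul ℂ,
      smul_smul, LinearMap.smul_apply]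
  have hzero : ∀ i, k ≤ i → ((L - μ • 1) ^ i) x = 0 := fun i hi =>
    Module.End.pow_map_zero_of_le hi hx
  rw [hbinom, Finset.sum_subset (Finset.range_subset_range.2 (Nat.le_add_right (n + 1) k)),
    Finset.sum_subset (Finset.range_subset_range.2 (Nat.le_add_left k (n + 1)))]
  · intro i _ hi
    rw [hzero i (by simpa using hi), smul_zero]
  · intro i _ hi
    rw [Nat.choose_eq_zero_of_lt (by simpa using hi)]
    simp

open Filter Topology Asymptotics in
theorem Nat.tendsto_choose_div_pow_of_le {i m : ℕ} (him : i ≤ m) :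
    Tendsto (fun n : ℕ => (n.choose i : ℝ) / (n : ℝ) ^ m) atTop
      (𝓝 (if i = m then ((m.factorial : ℝ))⁻¹ else 0)) := by
  split_ifs with h
  · subst h
    have h1 := (isEquivalent_choose i).div
      (IsEquivalent.refl (u := fun n : ℕ => (n : ℝ) ^ i) (l := atTop))
    refine (h1.symm.tendsto_nhds ?_)
    refine tendsto_const_nhds.congr' ?_
    filter_upwards [eventually_gt_atTop 0] with n hn
    have : (n : ℝ) ≠ 0 := by positivity
    simp only [Pi.div_apply]
    field_simp
  · have hlt : i < m := lt_of_le_of_ne him h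
    refine ((isTheta_choose i).1.trans_isLittleO ?_).tendsto_div_nhds_zero
    exact (isLittleO_pow_pow_atTop_of_lt (𝕜 := ℝ) hlt).comp_tendsto tendsto_natCast_atTop_atTop

open Filter Topology Asymptotics in
theorem Module.End.tendsto_smul_pow_apply_of_genEigenvector {E : Type*} [NormedAddCommGroup E]
    [NormedSpace ℂ E] {L : Module.End ℂ E} {μ : ℂ} (hμ : μ ≠ 0) {m : ℕ} {x : E}
    (hx : ((L - μ • 1) ^ (m + 1)) x = 0) :
    Tendsto (fun n : ℕ => ((n : ℂ) ^ m * μ ^ n)⁻¹ • (L ^ n) x) atTop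
      (𝓝 (((m.factorial : ℂ) * μ ^ m)⁻¹ • ((L - μ • 1) ^ m) x)) := by
  have hterm : ∀ i ∈ Finset.range (m + 1), Tendsto
      (fun n : ℕ => ((((n.choose i : ℝ) / (n : ℝ) ^ m : ℝ) : ℂ) * (μ ^ i)⁻¹) •
        ((L - μ • 1) ^ i) x) atTop
      (𝓝 ((((if i = m then ((m.factorial : ℝ))⁻¹ else 0 : ℝ) : ℂ) * (μ ^ i)⁻¹) •
        ((L - μ • 1) ^ i) x)) := fun i hi =>
    (((Complex.continuous_ofReal.tendsto _).comp (Nat.tendsto_choose_div_pow_of_le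
      (Nat.lt_succ_iff.1 (Finset.mem_range.1 hi)))).mul_const _).smul_const _
  have hlim : ∑ i ∈ Finset.range (m + 1),
      (((if i = m then ((m.factorial : ℝ))⁻¹ else 0 : ℝ) : ℂ) * (μ ^ i)⁻¹) •
        ((L - μ • 1) ^ i) x = ((m.factorial : ℂ) * μ ^ m)⁻¹ • ((L - μ • 1) ^ m) x := by
    rw [Finset.sum_eq_single_of_mem m (by simp)]
    · simp [mul_comm]
    · intro i _ hi
      simp [hi]
  rw [← hlim]
  refine (tendsto_finsetSum _ hterm).congr' ?_
  filter_upwards [eventually_ge_atTop m] with n hn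
  rw [Module.End.pow_apply_eq_sum_of_genEigenvector hx, Finset.smul_sum]
  refine Finset.sum_congr rfl fun i hi => ?_
  have hin : i ≤ n := (Nat.lt_succ_iff.1 (Finset.mem_range.1 hi)).trans hn
  rw [smul_smul, pow_sub₀ _ hμ hin]
  congr 1
  have := pow_ne_zero n hμ
  push_cast
  field_simp

open Filter Asymptotics in
theorem Module.End.isLittleO_pow_apply_of_genEigenvector {E : Type*} [NormedAddCommGroup E]
    [NormedSpace ℂ E] {L : Module.End ℂ E} {μ : ℂ} {r : ℝ} (hr : ‖μ‖ < r) {k : ℕ} {x : E}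
    (hx : ((L - μ • 1) ^ k) x = 0) :
    (fun n : ℕ => (L ^ n) x) =o[atTop] fun n : ℕ => r ^ n := by
  rcases eq_or_ne μ 0 with rfl | hμ
  · refine (isLittleO_zero _ _).congr' ?_ EventuallyEq.rfl
    filter_upwards [eventually_ge_atTop k] with n hn
    rw [zero_smul, sub_zero] at hx
    exact (Module.End.pow_map_zero_of_le hn hx).symm
  · simp_rw [Module.End.pow_apply_eq_sum_of_genEigenvector hx]
    refine IsLittleO.fun_sum fun i _ => ?_
    have h1 : (fun n : ℕ => (n.choose i : ℂ) * μ ^ (n - i)) =O[atTop]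
        fun n : ℕ => (n : ℂ) ^ i * μ ^ n := by
      refine IsBigO.of_bound (‖μ ^ i‖⁻¹) ?_
      filter_upwards [eventually_ge_atTop i] with n hn
      rw [pow_sub₀ _ hμ hn, norm_mul, norm_mul, norm_mul, norm_inv, norm_pow (n : ℂ),
        Complex.norm_natCast, Complex.norm_natCast]
      have h2 : (n.choose i : ℝ) ≤ (n : ℝ) ^ i := by exact_mod_cast Nat.choose_le_pow n i
      calc (n.choose i : ℝ) * (‖μ ^ n‖ * ‖μ ^ i‖⁻¹)
          ≤ (n : ℝ) ^ i * (‖μ ^ n‖ * ‖μ ^ i‖⁻¹) := by gcongr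
        _ = _ := by ring
    have h3 := h1.trans_isLittleO (isLittleO_pow_const_mul_const_pow_const_pow_of_norm_lt i hr)
    simpa using h3.smul_isBigO (isBigO_refl (fun _ : ℕ => ((L - μ • 1) ^ i) x) atTop) |>.trans_isBigO
      ((isBigO_refl (fun n : ℕ => r ^ n) atTop).smul
        (isBigO_const_const (((L - μ • 1) ^ i) x) (one_ne_zero (α := ℝ)) atTop))

open Filter Topology Asymptotics in
theorem tendsto_log_sub_div_log_of_isTheta {a : ℕ → ℝ} {ρ : ℝ} (hρ : 0 < ρ) {m : ℕ}
    (h : a =Θ[atTop] fun n : ℕ => (n : ℝ) ^ m * ρ ^ n) (ha : ∀ n, 0 ≤ a n) :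
    Tendsto (fun n : ℕ => (Real.log (a n) - n * Real.log ρ) / Real.log n) atTop (𝓝 (m : ℝ)) := by
  obtain ⟨C, hC, hle⟩ := h.1.exists_pos
  obtain ⟨c, hc, hge⟩ := h.2.exists_pos
  have hlog : Tendsto (fun n : ℕ => Real.log n) atTop atTop :=
    Real.tendsto_log_atTop.comp tendsto_natCast_atTop_atTop
  have hlow : Tendsto (fun n : ℕ => (m : ℝ) - Real.log c / Real.log n) atTop (𝓝 (m : ℝ)) := by
    simpa using tendsto_const_nhds.sub (hlog.const_div_atTop (Real.log c))
  have hupp : Tendsto (fun n : ℕ => (m : ℝ) + Real.log C / Real.log n) atTop (𝓝 (m : ℝ)) := by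
    simpa using tendsto_const_nhds.add (hlog.const_div_atTop (Real.log C))
  have hexp : ∀ n : ℕ, 1 < n →
      Real.log ((n : ℝ) ^ m * ρ ^ n) = m * Real.log n + n * Real.log ρ := fun n hn => by
    have : 0 < (n : ℝ) := by positivity
    rw [Real.log_mul (by positivity) (by positivity), Real.log_pow, Real.log_pow]
  refine tendsto_of_tendsto_of_tendsto_of_le_of_le' hlow hupp ?_ ?_
  · filter_upwards [hge.bound, eventually_gt_atTop 1] with n hn h1
    have hn0 : 0 < (n : ℝ) := by positivity
    have hln : 0 < Real.log n := Real.log_pos (by exact_mod_cast h1)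
    rw [Real.norm_of_nonneg (by positivity), Real.norm_of_nonneg (ha n)] at hn
    have hpos : 0 < a n := by
      have : 0 < c * a n := lt_of_lt_of_le (by positivity) hn
      exact pos_of_mul_pos_right this hc.le
    have h2 := Real.log_le_log (by positivity) hn
    rw [hexp n h1, Real.log_mul hc.ne' hpos.ne'] at h2
    rw [le_div_iff₀ hln, sub_mul, div_mul_cancel₀ _ hln.ne']
    linarith
  · filter_upwards [hge.bound, hle.bound, eventually_gt_atTop 1] with n hn hn' h1
    have hn0 : 0 < (n : ℝ) := by positivity
    have hln : 0 < Real.log n := Real.log_pos (by exact_mod_cast h1)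
    rw [Real.norm_of_nonneg (by positivity), Real.norm_of_nonneg (ha n)] at hn
    rw [Real.norm_of_nonneg (ha n), Real.norm_of_nonneg (by positivity)] at hn'
    have hpos : 0 < a n := by
      have : 0 < c * a n := lt_of_lt_of_le (by positivity) hn
      exact pos_of_mul_pos_right this hc.le
    have h2 := Real.log_le_log hpos hn'
    rw [Real.log_mul hC.ne' (by positivity), hexp n h1] at h2
    rw [div_le_iff₀ hln, add_mul, div_mul_cancel₀ _ hln.ne']
    linarith

open Filter Topology Asymptotics in
theorem Module.End.isBigO_pow_apply {E : Type*} [NormedAddCommGroup E] [NormedSpace ℂ E]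
    [FiniteDimensional ℂ E] {L : Module.End ℂ E} {r : ℝ} (hr : 0 < r) {m : ℕ}
    (hle : ∀ μ, ∀ x ∈ L.maxGenEigenspace μ, x ≠ 0 → ‖μ‖ ≤ r)
    (heq : ∀ μ, ‖μ‖ = r → ∀ x ∈ L.maxGenEigenspace μ, ((L - μ • 1) ^ (m + 1)) x = 0) (x : E) :
    (fun n : ℕ => (L ^ n) x) =O[atTop] fun n : ℕ => (n : ℝ) ^ m * r ^ n := by
  have hx : x ∈ ⨆ μ, L.maxGenEigenspace μ := by
    rw [Module.End.iSup_maxGenEigenspace_eq_top]; trivial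
  induction hx using Submodule.iSup_induction' with
  | zero => simpa using isBigO_zero _ _
  | add x y _ _ hx hy => simpa using hx.add hy
  | mem μ x hx =>
    rcases eq_or_ne x 0 with rfl | hx0
    · simpa using isBigO_zero _ _
    rcases (hle μ x hx hx0).lt_or_eq with hlt | hμ
    · obtain ⟨k, hk⟩ := (Module.End.mem_maxGenEigenspace L μ x).1 hx
      refine (Module.End.isLittleO_pow_apply_of_genEigenvector hlt hk).isBigO.trans
        (IsBigO.of_bound 1 ?_)
      filter_upwards [eventually_ge_atTop 1] with n hn
      have h1 : (1 : ℝ) ≤ (n : ℝ) ^ m := one_le_pow₀ (by exact_mod_cast hn)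
      rw [norm_mul, one_mul, Real.norm_of_nonneg (by positivity : (0 : ℝ) ≤ (n : ℝ) ^ m)]
      exact le_mul_of_one_le_left (norm_nonneg _) h1
    · have hμ0 : μ ≠ 0 := norm_pos_iff.1 (hμ ▸ hr)
      have h1 := (Module.End.tendsto_smul_pow_apply_of_genEigenvector hμ0
        (heq μ hμ x hx)).isBigO_one ℂ
      have h2 := (isBigO_refl (fun n : ℕ => (n : ℂ) ^ m * μ ^ n) atTop).smul h1
      refine (h2.congr' ?_ EventuallyEq.rfl).trans (IsBigO.of_bound 1 ?_)
      · filter_upwards [eventually_gt_atTop 0] with n hn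
        have : (n : ℂ) ≠ 0 := by exact_mod_cast hn.ne'
        exact smul_inv_smul₀ (mul_ne_zero (pow_ne_zero _ this) (pow_ne_zero _ hμ0)) _
      · refine Eventually.of_forall fun n => le_of_eq ?_
        simp [hμ, abs_of_pos hr]

open Filter Topology Asymptotics in
theorem Module.End.isBigO_pow_apply_of_genEigenvector {E : Type*} [NormedAddCommGroup E]
    [NormedSpace ℂ E] {L : Module.End ℂ E} {μ : ℂ} (hμ : μ ≠ 0) {m : ℕ} {x : E}
    (hx : ((L - μ • 1) ^ (m + 1)) x = 0) (hx' : ((L - μ • 1) ^ m) x ≠ 0) :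
    (fun n : ℕ => (n : ℝ) ^ m * ‖μ‖ ^ n) =O[atTop] fun n : ℕ => (L ^ n) x := by
  have h1 := Module.End.tendsto_smul_pow_apply_of_genEigenvector hμ hx
  have hne : ((m.factorial : ℂ) * μ ^ m)⁻¹ • ((L - μ • 1) ^ m) x ≠ 0 :=
    smul_ne_zero (inv_ne_zero (mul_ne_zero (by exact_mod_cast m.factorial_ne_zero)
      (pow_ne_zero _ hμ))) hx'
  have hpos : 0 < ‖((m.factorial : ℂ) * μ ^ m)⁻¹ • ((L - μ • 1) ^ m) x‖ := norm_pos_iff.2 hne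
  set d := ‖((m.factorial : ℂ) * μ ^ m)⁻¹ • ((L - μ • 1) ^ m) x‖
  refine IsBigO.of_bound (d / 2)⁻¹ ?_
  filter_upwards [h1.norm.eventually (lt_mem_nhds (half_lt_self hpos)),
    eventually_gt_atTop 0] with n hn hn0
  have hμ' : 0 < ‖μ‖ := norm_pos_iff.2 hμ
  have hn1 : (0 : ℝ) < n := by exact_mod_cast hn0
  change d / 2 < _ at hn
  rw [norm_smul, norm_inv, norm_mul, norm_pow, norm_pow, Complex.norm_natCast,
    lt_inv_mul_iff₀ (by positivity)] at hn
  rw [Real.norm_of_nonneg (by positivity), ← div_eq_inv_mul, le_div_iff₀ (by positivity)]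
  exact hn.le

theorem norm_le_specRadEnd {V : Type*} [AddCommGroup V] [Module ℂ V] [FiniteDimensional ℂ V]
    {f : Module.End ℂ V} {μ : ℂ} (hμ : f.HasEigenvalue μ) : ‖μ‖ ≤ specRadEnd f := by
  have hroot : μ ∈ (LinearMap.charpoly f).roots :=
    (Polynomial.mem_roots (LinearMap.charpoly_monic f).ne_zero).2
      ((Module.End.hasEigenvalue_iff_isRoot_charpoly f μ).1 hμ)
  exact_mod_cast (Multiset.le_sup (Multiset.mem_map_of_mem (fun z : ℂ => ‖z‖₊) hroot) :
    ‖μ‖₊ ≤ _)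

theorem Module.End.hasEigenvalue_of_pow_sub_smul_one_apply_eq_zero {V : Type*} [AddCommGroup V]
    [Module ℂ V] {f : Module.End ℂ V} {μ : ℂ} {k : ℕ} {v : V}
    (h : ((f - μ • 1) ^ k) v = 0) (hv : v ≠ 0) : f.HasEigenvalue μ :=
  Module.End.hasEigenvalue_of_hasGenEigenvalue (k := k)
    ((Submodule.ne_bot_iff _).2 ⟨v, Module.End.mem_genEigenspace_nat.2 h, hv⟩)

theorem specRadEnd_pos {V : Type*} [AddCommGroup V] [Module ℂ V] [FiniteDimensional ℂ V]
    {f : Module.End ℂ V} (hf : ¬ IsNilpotent f) : 0 < specRadEnd f := by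
  by_contra! h0
  have hzero : ∀ μ, f.HasEigenvalue μ → μ = 0 := fun μ hμ =>
    norm_le_zero_iff.1 ((norm_le_specRadEnd hμ).trans h0)
  refine hf (((LinearMap.charpoly_nilpotent_tfae f).out 0 2).2 fun v => ?_)
  have htop : (⊤ : Submodule ℂ V) ≤ f.maxGenEigenspace 0 := by
    rw [← Module.End.iSup_maxGenEigenspace_eq_top f]
    refine iSup_le fun μ v hv => ?_
    rcases eq_or_ne v 0 with rfl | hv0
    · exact zero_mem _
    obtain ⟨k, hk⟩ := (Module.End.mem_maxGenEigenspace f μ v).1 hv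
    rwa [← hzero μ (Module.End.hasEigenvalue_of_pow_sub_smul_one_apply_eq_zero hk hv0)]
  simpa using (Module.End.mem_maxGenEigenspace f 0 v).1 (htop trivial)

theorem Module.End.exists_isLeast_ker_pow_eq_ker_pow_succ {V : Type*} [AddCommGroup V]
    [Module ℂ V] [FiniteDimensional ℂ V] (g : Module.End ℂ V) :
    ∃ j, IsLeast {i : ℕ | 0 < i ∧ LinearMap.ker (g ^ i) = LinearMap.ker (g ^ (i + 1))} j := by
  classical
  have hex : ∃ i : ℕ, 0 < i ∧ LinearMap.ker (g ^ i) = LinearMap.ker (g ^ (i + 1)) :=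
    ⟨Module.finrank ℂ V + 1, Nat.succ_pos _, by
      rw [Module.End.ker_pow_eq_ker_pow_finrank_of_le (Nat.le_add_right _ 1),
        Module.End.ker_pow_eq_ker_pow_finrank_of_le (Nat.le_add_right _ 2)]⟩
  exact ⟨Nat.find hex, Nat.find_spec hex, fun i hi => Nat.find_min' hex hi⟩

theorem LinearMap.mulLeft_sub_smul_one_pow_apply {V : Type*} [AddCommGroup V] [Module ℂ V]
    (f : Module.End ℂ V) (μ : ℂ) (j : ℕ) (g : Module.End ℂ V) :
    ((LinearMap.mulLeft ℂ f - μ • 1) ^ j) g = (f - μ • 1) ^ j * g := by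
  have h : LinearMap.mulLeft ℂ f - μ • 1 = LinearMap.mulLeft ℂ (f - μ • 1) := by
    ext1 g
    simp [sub_mul]
  rw [h, LinearMap.pow_mulLeft, LinearMap.mulLeft_apply]

/-- If `j` is the least positive index at which the kernels of the powers of `g = f - μ • 1`
stabilize and `μ` is an eigenvalue, some vector is killed by `g ^ j` but not by `g ^ (j - 1)`. -/
theorem Module.End.exists_apply_ne_zero_of_isLeast {V : Type*} [AddCommGroup V] [Module ℂ V]
    {f : Module.End ℂ V} {μ : ℂ} (hμ : f.HasEigenvalue μ) {m : ℕ}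
    (hm : IsLeast {i : ℕ | 0 < i ∧ LinearMap.ker ((f - μ • 1) ^ i) =
      LinearMap.ker ((f - μ • 1) ^ (i + 1))} (m + 1)) :
    ∃ v, ((f - μ • 1) ^ (m + 1)) v = 0 ∧ ((f - μ • 1) ^ m) v ≠ 0 := by
  rcases Nat.eq_zero_or_pos m with rfl | hm0
  · obtain ⟨v, hv⟩ := hμ.exists_hasEigenvector
    exact ⟨v, by simp [hv.apply_eq_smul], by simpa using hv.2⟩
  · by_contra! h
    have hker : LinearMap.ker ((f - μ • 1) ^ m) = LinearMap.ker ((f - μ • 1) ^ (m + 1)) :=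
      le_antisymm (fun v hv => Module.End.pow_map_zero_of_le m.le_succ hv) fun v hv => h v hv
    exact absurd (hm.2 ⟨hm0, hker⟩) (by omega)

/-- For a non-nilpotent endomorphism `f` of a nonzero finite-dimensional complex
vector space and any norm `N` on `End(V)`, the polynomial growth rate
`s(f) = lim_n (log N(f^n) - n·log ρ(f)) / log n` equals `k - 1`, where `k` is the
maximum, over all eigenvalues `λ` of `f` with `|λ| = ρ(f)`, of the least positive
integer `j` with `ker((f - λ·id)^j) = ker((f - λ·id)^{j+1})`. -/
theorem polynomialGrowthRate_eq_max_jordan_size_sub_one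
    (V : Type*) [AddCommGroup V] [Module ℂ V] [FiniteDimensional ℂ V]
    [Nontrivial V] (f : Module.End ℂ V) (hf : ¬ IsNilpotent f)
    (N : Module.End ℂ V → ℝ)
    (hN0 : ∀ g, 0 ≤ N g)
    (hN1 : ∀ g, N g = 0 ↔ g = 0)
    (hN2 : ∀ (c : ℂ) (g : Module.End ℂ V), N (c • g) = ‖c‖ * N g)
    (hN3 : ∀ g h : Module.End ℂ V, N (g + h) ≤ N g + N h)
    (k : ℕ)
    (hk : IsGreatest {j : ℕ | ∃ lam : ℂ,
        (LinearMap.charpoly f).IsRoot lam ∧ ‖lam‖ = specRadEnd f ∧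
        IsLeast {i : ℕ | 0 < i ∧
          LinearMap.ker ((f - lam • 1) ^ i) =
            LinearMap.ker ((f - lam • 1) ^ (i + 1))} j} k) :
    Filter.Tendsto
      (fun n : ℕ =>
        (Real.log (N (f ^ n)) - n * Real.log (specRadEnd f)) / Real.log n)
      Filter.atTop (nhds ((k : ℝ) - 1)) := by
  obtain ⟨⟨lam, hroot, hlam, hleast⟩, hmax⟩ := hk
  obtain ⟨m, rfl⟩ : ∃ m, k = m + 1 := ⟨k - 1, (Nat.succ_pred_eq_of_pos hleast.1.1).symm⟩
  have hρ := specRadEnd_pos hf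
  let _ : Norm (Module.End ℂ V) := ⟨N⟩
  have core : NormedSpace.Core ℂ (Module.End ℂ V) := ⟨⟨hN0, hN2, hN3⟩, hN1⟩
  let _ : NormedAddCommGroup (Module.End ℂ V) := NormedAddCommGroup.ofCore core
  let _ : NormedSpace ℂ (Module.End ℂ V) := NormedSpace.ofCore core
  have hupper := Module.End.isBigO_pow_apply (L := LinearMap.mulLeft ℂ f) hρ (m := m)
    (fun μ g hg hg0 => by
      obtain ⟨j, hj⟩ := (Module.End.mem_maxGenEigenspace _ μ g).1 hg
      rw [LinearMap.mulLeft_sub_smul_one_pow_apply] at hj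
      obtain ⟨v, hv⟩ := DFunLike.ne_iff.1 hg0
      exact norm_le_specRadEnd (Module.End.hasEigenvalue_of_pow_sub_smul_one_apply_eq_zero
        (LinearMap.congr_fun hj v) hv))
    (fun μ hμ g hg => by
      obtain ⟨i, hi⟩ := (Module.End.mem_maxGenEigenspace _ μ g).1 hg
      rw [LinearMap.mulLeft_sub_smul_one_pow_apply] at hi ⊢
      ext v
      by_cases hv : g v = 0
      · simp [hv]
      have hiv : ((f - μ • 1) ^ i) (g v) = 0 := LinearMap.congr_fun hi v
      obtain ⟨j, hj⟩ := Module.End.exists_isLeast_ker_pow_eq_ker_pow_succ (f - μ • 1)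
      have hjm : j ≤ m + 1 := hmax ⟨μ, (Module.End.hasEigenvalue_iff_isRoot_charpoly f μ).1
        (Module.End.hasEigenvalue_of_pow_sub_smul_one_apply_eq_zero hiv hv), hμ, hj⟩
      have hmem : g v ∈ LinearMap.ker ((f - μ • 1) ^ j) := by
        rw [Module.End.ker_pow_constant hj.1.2 i]
        exact Module.End.pow_map_zero_of_le (Nat.le_add_left i j) hiv
      exact show ((f - μ • 1) ^ (m + 1)) (g v) = 0 from
        Module.End.pow_map_zero_of_le hjm hmem) 1
  obtain ⟨v, hv, hv'⟩ := Module.End.exists_apply_ne_zero_of_isLeast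
    ((Module.End.hasEigenvalue_iff_isRoot_charpoly f lam).2 hroot) hleast
  obtain ⟨φ, hφ⟩ := Module.Projective.exists_dual_ne_zero ℂ (show v ≠ 0 by rintro rfl; simp at hv')
  have hlam0 : lam ≠ 0 := norm_pos_iff.1 (hlam ▸ hρ)
  have hlower := Module.End.isBigO_pow_apply_of_genEigenvector (L := LinearMap.mulLeft ℂ f) hlam0
    (m := m) (x := φ.smulRight v)
    (by
      rw [LinearMap.mulLeft_sub_smul_one_pow_apply]
      ext w
      simp [hv])
    (by
      rw [LinearMap.mulLeft_sub_smul_one_pow_apply]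
      intro h
      have h' := LinearMap.congr_fun h v
      simp [hφ, hv'] at h')
  have hright := ContinuousLinearMap.isBigO_comp
    (LinearMap.toContinuousLinearMap (LinearMap.mulRight ℂ (φ.smulRight v : Module.End ℂ V)))
    (fun n : ℕ => f ^ n) Filter.atTop
  simp only [LinearMap.pow_mulLeft, LinearMap.mulLeft_apply, mul_one, hlam] at hupper hlower
  have htheta : (fun n : ℕ => N (f ^ n)) =Θ[Filter.atTop]
      fun n : ℕ => (n : ℝ) ^ m * specRadEnd f ^ n :=
    ⟨hupper.norm_left, (hlower.trans hright).norm_right⟩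
  simpa using tendsto_log_sub_div_log_of_isTheta hρ htheta fun n => hN0 _
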